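/- arXiv:2304.04373 — 2 statements merged into one kernel-verified Lean document; each statement's English description precedes it below -/
import Mathlib

section
/- Let -∞ < a < b < ∞, 1 ≤ p < ∞, let μ be a weight on [a,b], let Φ be a Young function such that Λ(t) := Φ(t^{1/p}) is convex, and let h and g be nonnegative measurable functions on [a,b]. Then ‖ x ↦ (∫_a^x g(t) dt)^{1/p} · h(x) ‖_{L_μ^Φ[a,b]}^p ≤ 2 · ∫_a^b g(t) · ‖h‖_{L_μ^Φ[t,b]}^p dt. -/
open MeasureTheory Set Filter
open scoped ENNReal NNReal

noncomputable section

/-- A Young function: even, convex, vanishing at `0`, nonnegative, tending to `∞`. -/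
def IsYoung (Φ : ℝ → ℝ) : Prop :=
  ConvexOn ℝ Set.univ Φ ∧ (∀ t, Φ (-t) = Φ t) ∧ Φ 0 = 0 ∧ (∀ t, 0 ≤ Φ t) ∧
    Filter.Tendsto Φ Filter.atTop Filter.atTop

/-- A weight on `[a,b]`: nonnegative, measurable, positive a.e. on `[a,b]`. -/
def IsWeight (w : ℝ → ℝ) (a b : ℝ) : Prop :=
  Measurable w ∧ (∀ x, 0 ≤ w x) ∧
    ∀ᵐ x ∂(MeasureTheory.volume.restrict (Set.Icc a b)), 0 < w x

/-- `Φ` is submultiplicative on `[0,∞)`. -/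
def Submult (Φ : ℝ → ℝ) : Prop :=
  ∀ s t : ℝ, 0 ≤ s → 0 ≤ t → Φ (s * t) ≤ Φ s * Φ t

/-- `Φinv` is the inverse of `Φ` restricted to `[0,∞)`. -/
def IsYoungInv (Φ Φinv : ℝ → ℝ) : Prop :=
  (∀ t, 0 ≤ t → 0 ≤ Φinv t) ∧ (∀ t, 0 ≤ t → Φ (Φinv t) = t) ∧
    (∀ t, 0 ≤ t → Φinv (Φ t) = t)

/-- `μ[x,y] := ∫ₓ^y μ(t) dt`, as an extended nonnegative real. -/
def wInt (μ : ℝ → ℝ) (x y : ℝ) : ℝ≥0∞ :=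
  ∫⁻ t in Set.Icc x y, ENNReal.ofReal (μ t)

/-- The Luxemburg (gauge) norm of `f` on `[a,b]` w.r.t. the Young function `Φ`
and the weight `μ`: `inf {k > 0 : ∫ₐ^b Φ(f/k) μ ≤ 1}` (`∞` if no such `k`). -/
def luxNorm (Φ μ : ℝ → ℝ) (a b : ℝ) (f : ℝ → ℝ) : ℝ≥0∞ :=
  sInf {k : ℝ≥0∞ | ∃ c : ℝ, 0 < c ∧ k = ENNReal.ofReal c ∧
    (∫⁻ x in Set.Icc a b, ENNReal.ofReal (Φ (f x / c) * μ x)) ≤ 1}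

/-- `f` is Lipschitz on `[a,b]` and `f'` is a.e. its derivative on `(a,b)`. -/
def LipschitzWithDeriv (f f' : ℝ → ℝ) (a b : ℝ) : Prop :=
  (∃ K, LipschitzOnWith K f (Set.Icc a b)) ∧
    ∀ᵐ x ∂(MeasureTheory.volume.restrict (Set.Ioo a b)), HasDerivAt f (f' x) x

/-- The weighted `L^p` norm `(∫ₐ^b |g|^p w)^{1/p}`, as an extended nonnegative real. -/
def lpNorm (w : ℝ → ℝ) (p a b : ℝ) (g : ℝ → ℝ) : ℝ≥0∞ :=
  (∫⁻ t in Set.Icc a b, ENNReal.ofReal (|g t| ^ p * w t)) ^ (1 / p)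

/-- The Luxemburg (gauge) norm on a general measure space. -/
def luxNormGen {Ω : Type*} [MeasurableSpace Ω] (Φ : ℝ → ℝ) (μ : Measure Ω)
    (f : Ω → ℝ) : ℝ≥0∞ :=
  sInf {k : ℝ≥0∞ | ∃ c : ℝ, 0 < c ∧ k = ENNReal.ofReal c ∧
    (∫⁻ x, ENNReal.ofReal (Φ (f x / c)) ∂μ) ≤ 1}

/-- The Luxemburg (gauge) norm for an extended-real-valued Young function. -/
def luxNormE {Ω : Type*} [MeasurableSpace Ω] (Ψ : ℝ → ℝ≥0∞) (μ : Measure Ω)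
    (f : Ω → ℝ) : ℝ≥0∞ :=
  sInf {k : ℝ≥0∞ | ∃ c : ℝ, 0 < c ∧ k = ENNReal.ofReal c ∧
    (∫⁻ x, Ψ (f x / c) ∂μ) ≤ 1}

/-!
The substitution `Λ t = Φ (|t| ^ (1 / p))` turns the claim into an instance of Minkowski's integral
inequality for the gauge norm of `Λ`, since `‖f‖_Φ ^ p = ‖|f| ^ p‖_Λ` and
`(∫ₐˣ g) * h(x) ^ p = ∫ 1_{t ≤ x} h(x) ^ p g(t) dt`.

For Minkowski's inequality let `N t = ‖F t‖_Λ` and `∫ N ≤ K`. Then `∫ F t / K dt` is the integral of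
the normalized functions `F t / N t` against the measure `(N t / K) dt` of total mass at most one,
so Jensen's inequality, together with `Λ 0 = 0`, bounds its modular by an average of the modulars
of the `F t / N t`.
-/

namespace IsYoung

variable {Φ : ℝ → ℝ}

lemma map_zero (hΦ : IsYoung Φ) : Φ 0 = 0 := hΦ.2.2.1

lemma nonneg (hΦ : IsYoung Φ) (t : ℝ) : 0 ≤ Φ t := hΦ.2.2.2.1 t

lemma tendsto_atTop (hΦ : IsYoung Φ) : Tendsto Φ atTop atTop := hΦ.2.2.2.2

lemma map_mul_le (hΦ : IsYoung Φ) {r : ℝ} (hr₀ : 0 ≤ r) (hr₁ : r ≤ 1) (t : ℝ) :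
    Φ (r * t) ≤ r * Φ t := by
  simpa [hΦ.map_zero] using hΦ.1.2 (mem_univ t) (mem_univ 0) hr₀ (sub_nonneg.2 hr₁) (by ring)

lemma map_abs (hΦ : IsYoung Φ) (t : ℝ) : Φ |t| = Φ t := by
  rcases abs_choice t with ht | ht <;> simp [ht, hΦ.2.1]

lemma map_div_le_map_div (hΦ : IsYoung Φ) {c d : ℝ} (hd : 0 < d) (hdc : d ≤ c) (t : ℝ) :
    Φ (t / c) ≤ Φ (t / d) := by
  have hc : 0 < c := hd.trans_le hdc
  have hr : d / c ≤ 1 := (div_le_one hc).2 hdc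
  calc Φ (t / c) = Φ (d / c * (t / d)) := by congr 1; field_simp
    _ ≤ d / c * Φ (t / d) := hΦ.map_mul_le (by positivity) hr _
    _ ≤ Φ (t / d) := mul_le_of_le_one_left (hΦ.nonneg _) hr

lemma continuous (hΦ : IsYoung Φ) : Continuous Φ := by
  simpa using hΦ.1.continuousOn_interior

lemma measurable (hΦ : IsYoung Φ) : Measurable Φ := hΦ.continuous.measurable

lemma tendsto_natCast_mul_atTop (hΦ : IsYoung Φ) {t : ℝ} (ht : t ≠ 0) :
    Tendsto (fun n : ℕ => Φ (n * t)) atTop atTop := by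
  have habs : Tendsto (fun n : ℕ => Φ (n * |t|)) atTop atTop :=
    hΦ.tendsto_atTop.comp (tendsto_natCast_atTop_atTop.atTop_mul_const (abs_pos.2 ht))
  refine habs.congr fun n => ?_
  rw [← hΦ.map_abs (n * t), abs_mul, Nat.abs_cast]

lemma comp_abs_rpow (hΦ : IsYoung Φ) {q : ℝ} (hq : 0 < q)
    (hΛ : ConvexOn ℝ univ fun t => Φ (|t| ^ q)) : IsYoung fun t => Φ (|t| ^ q) := by
  refine ⟨hΛ, fun t => by simp only [abs_neg], ?_, fun t => hΦ.nonneg _, ?_⟩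
  · simp [Real.zero_rpow hq.ne', hΦ.map_zero]
  · exact hΦ.tendsto_atTop.comp ((tendsto_rpow_atTop hq).comp tendsto_abs_atTop_atTop)

lemma ofReal_map_integral_le {α : Type*} [MeasurableSpace α] {m : Measure α} (hΦ : IsYoung Φ)
    (hm : m univ ≤ 1) (f : α → ℝ) :
    ENNReal.ofReal (Φ (∫ t, f t ∂m)) ≤ ∫⁻ t, ENNReal.ofReal (Φ (f t)) ∂m := by
  have : IsFiniteMeasure m := ⟨hm.trans_lt ENNReal.one_lt_top⟩
  by_cases hf : Integrable f m
  swap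
  · simp [integral_undef hf, hΦ.map_zero]
  by_cases hΦf : Integrable (fun t => Φ (f t)) m
  swap
  · have htop : ∫⁻ t, ENNReal.ofReal (Φ (f t)) ∂m = ∞ := by
      by_contra hne
      exact hΦf ⟨hΦ.continuous.comp_aestronglyMeasurable hf.1,
        (hasFiniteIntegral_iff_ofReal (ae_of_all _ fun t => hΦ.nonneg _)).2 (Ne.lt_top hne)⟩
    simp [htop]
  rcases eq_or_ne m 0 with rfl | hm₀
  · simp [hΦ.map_zero]
  have : NeZero m := ⟨hm₀⟩
  rw [← ofReal_integral_eq_lintegral_ofReal hΦf (ae_of_all _ fun t => hΦ.nonneg _)]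
  refine ENNReal.ofReal_le_ofReal ?_
  calc Φ (∫ t, f t ∂m) = Φ (m.real univ * ⨍ t, f t ∂m) := by
        rw [← smul_eq_mul, measure_smul_average]
    _ ≤ m.real univ * Φ (⨍ t, f t ∂m) :=
        hΦ.map_mul_le measureReal_nonneg (ENNReal.toReal_mono ENNReal.one_ne_top hm) _
    _ ≤ m.real univ * ⨍ t, Φ (f t) ∂m := by
        gcongr
        exact hΦ.1.map_average_le hΦ.continuous.continuousOn isClosed_univ (by simp) hf hΦf
    _ = ∫ t, Φ (f t) ∂m := by rw [← smul_eq_mul, measure_smul_average]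

end IsYoung

section GaugeNorm

open scoped Topology

variable {Ω : Type*} [MeasurableSpace Ω] {Φ : ℝ → ℝ} {ν : Measure Ω} {f : Ω → ℝ}

lemma luxNormGen_le_ofReal {c : ℝ} (hc : 0 < c)
    (h : ∫⁻ x, ENNReal.ofReal (Φ (f x / c)) ∂ν ≤ 1) : luxNormGen Φ ν f ≤ ENNReal.ofReal c :=
  sInf_le ⟨c, hc, rfl, h⟩

lemma luxNormGen_congr_ae {f' : Ω → ℝ} (h : f =ᵐ[ν] f') :
    luxNormGen Φ ν f = luxNormGen Φ ν f' := by
  have hmod (c : ℝ) : ∫⁻ x, ENNReal.ofReal (Φ (f x / c)) ∂ν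
      = ∫⁻ x, ENNReal.ofReal (Φ (f' x / c)) ∂ν :=
    lintegral_congr_ae (h.mono fun x hx => by simp only [hx])
  simp only [luxNormGen, hmod]

lemma luxNormGen_indicator (hΦ₀ : Φ 0 = 0) {s : Set Ω} (hs : MeasurableSet s) (f : Ω → ℝ) :
    luxNormGen Φ ν (s.indicator f) = luxNormGen Φ (ν.restrict s) f := by
  have hmod (c : ℝ) : ∫⁻ x, ENNReal.ofReal (Φ (s.indicator f x / c)) ∂ν
      = ∫⁻ x in s, ENNReal.ofReal (Φ (f x / c)) ∂ν := by
    rw [← lintegral_indicator hs]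
    refine lintegral_congr fun x => ?_
    by_cases hx : x ∈ s <;> simp [hx, hΦ₀]
  simp only [luxNormGen, hmod]

lemma luxNormGen_rpow (hΦ : IsYoung Φ) {p : ℝ} (hp : 0 < p) (f : Ω → ℝ) :
    luxNormGen Φ ν f ^ p = luxNormGen (fun t => Φ (|t| ^ (1 / p))) ν (fun x => |f x| ^ p) := by
  have hcancel {c : ℝ} (hc : 0 ≤ c) : (c ^ p) ^ (1 / p) = c := by
    rw [one_div, Real.rpow_rpow_inv hc hp.ne']
  have hmod {c : ℝ} (hc : 0 < c) :
      ∫⁻ x, ENNReal.ofReal (Φ (|(|f x| ^ p / c ^ p)| ^ (1 / p))) ∂ν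
        = ∫⁻ x, ENNReal.ofReal (Φ (f x / c)) ∂ν := by
    refine lintegral_congr fun x => ?_
    rw [abs_of_nonneg (by positivity), ← Real.div_rpow (abs_nonneg _) hc.le,
      hcancel (by positivity), ← hΦ.map_abs (f x / c), abs_div, abs_of_pos hc]
  rw [← ENNReal.orderIsoRpow_apply p hp, luxNormGen, map_sInf, luxNormGen]
  congr 1
  ext k
  constructor
  · rintro ⟨_, ⟨c, hc, rfl, h⟩, rfl⟩
    exact ⟨c ^ p, by positivity, ENNReal.ofReal_rpow_of_pos hc, (hmod hc).trans_le h⟩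
  · rintro ⟨d, hd, rfl, h⟩
    obtain ⟨c, hc, rfl⟩ : ∃ c : ℝ, 0 < c ∧ c ^ p = d :=
      ⟨d ^ p⁻¹, by positivity, Real.rpow_inv_rpow hd.le hp.ne'⟩
    exact ⟨_, ⟨c, hc, rfl, (hmod hc).symm.trans_le h⟩, ENNReal.ofReal_rpow_of_pos hc⟩

lemma lintegral_map_div_le_one_of_luxNormGen_lt (hΦ : IsYoung Φ) {c : ℝ}
    (hc : luxNormGen Φ ν f < ENNReal.ofReal c) :
    ∫⁻ x, ENNReal.ofReal (Φ (f x / c)) ∂ν ≤ 1 := by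
  obtain ⟨_, ⟨d, hd, rfl, hmod⟩, hdc⟩ := sInf_lt_iff.1 hc
  have hdc : d < c := (ENNReal.ofReal_lt_ofReal_iff_of_nonneg hd.le).1 hdc
  refine le_trans (lintegral_mono fun x => ?_) hmod
  exact ENNReal.ofReal_le_ofReal (hΦ.map_div_le_map_div hd hdc.le _)

lemma luxNormGen_le_ofReal_iff (hΦ : IsYoung Φ) (hf : Measurable f) {c : ℝ} (hc : 0 < c) :
    luxNormGen Φ ν f ≤ ENNReal.ofReal c ↔ ∫⁻ x, ENNReal.ofReal (Φ (f x / c)) ∂ν ≤ 1 := by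
  refine ⟨fun h => ?_, luxNormGen_le_ofReal hc⟩
  obtain ⟨d, -, hcd, hd⟩ := exists_seq_strictAnti_tendsto c
  have hlim (x : Ω) : Tendsto (fun n => ENNReal.ofReal (Φ (f x / d n))) atTop
      (𝓝 (ENNReal.ofReal (Φ (f x / c)))) :=
    ENNReal.tendsto_ofReal <|
      (hΦ.continuous.tendsto _).comp (tendsto_const_nhds.div hd hc.ne')
  have hmod (n : ℕ) : ∫⁻ x, ENNReal.ofReal (Φ (f x / d n)) ∂ν ≤ 1 :=
    lintegral_map_div_le_one_of_luxNormGen_lt hΦ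
      (h.trans_lt ((ENNReal.ofReal_lt_ofReal_iff_of_nonneg hc.le).2 (hcd n)))
  calc ∫⁻ x, ENNReal.ofReal (Φ (f x / c)) ∂ν
      = ∫⁻ x, liminf (fun n => ENNReal.ofReal (Φ (f x / d n))) atTop ∂ν :=
        lintegral_congr fun x => (hlim x).liminf_eq.symm
    _ ≤ liminf (fun n => ∫⁻ x, ENNReal.ofReal (Φ (f x / d n)) ∂ν) atTop :=
        lintegral_liminf_le fun n => (hΦ.measurable.comp (hf.div_const _)).ennreal_ofReal
    _ ≤ 1 := liminf_le_of_frequently_le' (Frequently.of_forall hmod)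

lemma ae_eq_zero_of_luxNormGen_eq_zero (hΦ : IsYoung Φ) (hf : Measurable f)
    (h : luxNormGen Φ ν f = 0) : f =ᵐ[ν] 0 := by
  have hmod (n : ℕ) : ∫⁻ x, ENNReal.ofReal (Φ (n * f x)) ∂ν ≤ 1 := by
    rcases n.eq_zero_or_pos with rfl | hn
    · simp [hΦ.map_zero]
    have hc : (0 : ℝ) < (n : ℝ)⁻¹ := by positivity
    simpa [div_eq_mul_inv, mul_comm] using
      (luxNormGen_le_ofReal_iff hΦ hf hc).1 (h.trans_le zero_le)
  have hmeas (n : ℕ) : Measurable fun x => ENNReal.ofReal (Φ (n * f x)) :=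
    (hΦ.measurable.comp (hf.const_mul _)).ennreal_ofReal
  have hfin : ∫⁻ x, liminf (fun n : ℕ => ENNReal.ofReal (Φ (n * f x))) atTop ∂ν ≠ ∞ :=
    ((lintegral_liminf_le hmeas).trans
      (liminf_le_of_frequently_le' (Frequently.of_forall hmod))).trans_lt
        ENNReal.one_lt_top |>.ne
  filter_upwards [ae_lt_top (.liminf hmeas) hfin] with x hx
  by_contra hfx
  exact hx.ne (ENNReal.tendsto_ofReal_atTop.comp (hΦ.tendsto_natCast_mul_atTop hfx)).liminf_eq

/- Where the norm is `0` or `∞` the quotient is `0` by the conventions for `/` and `toReal`. -/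
lemma lintegral_map_div_luxNormGen_le_one (hΦ : IsYoung Φ) (hf : Measurable f) :
    ∫⁻ x, ENNReal.ofReal (Φ (f x / (luxNormGen Φ ν f).toReal)) ∂ν ≤ 1 := by
  rcases (ENNReal.toReal_nonneg (a := luxNormGen Φ ν f)).eq_or_lt with h | h
  · simp [← h, hΦ.map_zero]
  · exact (luxNormGen_le_ofReal_iff hΦ hf h).1
      (ENNReal.ofReal_toReal (ENNReal.toReal_pos_iff.1 h).2.ne).ge

end GaugeNorm

section Minkowski

variable {α Ω : Type*} [MeasurableSpace α] [MeasurableSpace Ω] {Φ : ℝ → ℝ} {ν : Measure Ω}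
  {F : α → Ω → ℝ}

lemma measurable_luxNormGen [SFinite ν] (hΦ : IsYoung Φ) (hF : Measurable (Function.uncurry F)) :
    Measurable fun t => luxNormGen Φ ν (F t) := by
  refine measurable_of_Iio fun r => ?_
  have hset : (fun t => luxNormGen Φ ν (F t)) ⁻¹' Iio r
      = ⋃ q ∈ {q : ℚ | 0 < q ∧ ENNReal.ofReal q < r},
          {t | ∫⁻ x, ENNReal.ofReal (Φ (F t x / q)) ∂ν ≤ 1} := by
    ext t
    simp only [mem_preimage, mem_Iio, mem_iUnion, mem_ofPred_eq, exists_prop]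
    constructor
    · intro h
      obtain ⟨q, -, htq, hqr⟩ := ENNReal.lt_iff_exists_rat_btwn.1 h
      have hq : (0 : ℝ) < q := ENNReal.ofReal_pos.1 (pos_of_gt htq)
      exact ⟨q, ⟨mod_cast hq, hqr⟩, lintegral_map_div_le_one_of_luxNormGen_lt hΦ htq⟩
    · rintro ⟨q, ⟨hq, hqr⟩, hmod⟩
      exact (luxNormGen_le_ofReal (mod_cast hq) hmod).trans_lt hqr
  rw [hset]
  refine MeasurableSet.biUnion (to_countable _) fun q _ => measurableSet_le ?_ measurable_const
  exact Measurable.lintegral_prod_right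
    (hΦ.measurable.comp (hF.div_const _)).ennreal_ofReal

variable {τ : Measure α}

lemma ae_ae_eq_zero_of_luxNormGen_eq_zero [SFinite τ] [SFinite ν] (hΦ : IsYoung Φ)
    (hF : Measurable (Function.uncurry F)) :
    ∀ᵐ x ∂ν, ∀ᵐ t ∂τ, luxNormGen Φ ν (F t) = 0 → F t x = 0 := by
  have hN := measurable_luxNormGen (ν := ν) hΦ hF
  have hmeas : MeasurableSet {z : α × Ω | luxNormGen Φ ν (F z.1) = 0 → F z.1 z.2 = 0} :=
    (measurableSet_eq_fun (hN.comp measurable_fst) measurable_const).imp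
      (measurableSet_eq_fun hF measurable_const)
  refine (Measure.ae_ae_comm hmeas).1 (ae_of_all _ fun t => ?_)
  by_cases ht : luxNormGen Φ ν (F t) = 0
  · filter_upwards [ae_eq_zero_of_luxNormGen_eq_zero hΦ hF.of_uncurry_left ht] with x hx _
    exact hx
  · simp [ht]

lemma lintegral_div_const_le_one {u : α → ℝ≥0∞} (hu : Measurable u) {k : ℝ≥0∞}
    (h : ∫⁻ t, u t ∂τ ≤ k) : ∫⁻ t, u t / k ∂τ ≤ 1 := by
  simp only [div_eq_mul_inv]
  rw [lintegral_mul_const _ hu, ← div_eq_mul_inv]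
  exact ENNReal.div_le_of_le_mul (by rwa [one_mul])

lemma ofReal_map_integral_div_le [SFinite ν] (hΦ : IsYoung Φ)
    (hF : Measurable (Function.uncurry F)) {K : ℝ} (hK : 0 < K)
    (hFK : ∫⁻ t, luxNormGen Φ ν (F t) ∂τ ≤ ENNReal.ofReal K) {x : Ω}
    (hx : ∀ᵐ t ∂τ, luxNormGen Φ ν (F t) = 0 → F t x = 0) :
    ENNReal.ofReal (Φ ((∫ t, F t x ∂τ) / K)) ≤
      ∫⁻ t, luxNormGen Φ ν (F t) / ENNReal.ofReal K *
        ENNReal.ofReal (Φ (F t x / (luxNormGen Φ ν (F t)).toReal)) ∂τ := by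
  set N := fun t => luxNormGen Φ ν (F t)
  have hN : Measurable N := measurable_luxNormGen hΦ hF
  have hFx : Measurable fun t => F t x := hF.of_uncurry_right
  set w := fun t => N t / ENNReal.ofReal K
  have hw : Measurable w := hN.div_const _
  have hNfin : ∀ᵐ t ∂τ, N t < ∞ :=
    ae_lt_top hN (hFK.trans_lt ENNReal.ofReal_lt_top).ne
  have hwfin : ∀ᵐ t ∂τ, w t < ∞ :=
    hNfin.mono fun t ht => ENNReal.div_lt_top ht.ne (ENNReal.ofReal_pos.2 hK).ne'
  have hmass : τ.withDensity w univ ≤ 1 := by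
    rw [withDensity_apply _ MeasurableSet.univ, Measure.restrict_univ]
    exact lintegral_div_const_le_one hN hFK
  have hnormalize : (∫ t, F t x ∂τ) / K = ∫ t, F t x / (N t).toReal ∂τ.withDensity w := by
    rw [integral_withDensity_eq_integral_toReal_smul hw hwfin, ← integral_div]
    refine integral_congr_ae ?_
    filter_upwards [hx, hNfin] with t ht htfin
    rcases eq_or_ne (N t) 0 with hNt | hNt
    · simp [ht hNt]
    · have : (N t).toReal ≠ 0 := (ENNReal.toReal_pos hNt htfin.ne).ne'
      simp only [w, ENNReal.toReal_div, ENNReal.toReal_ofReal hK.le, smul_eq_mul]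
      field_simp
  rw [hnormalize]
  refine (hΦ.ofReal_map_integral_le hmass _).trans_eq ?_
  exact lintegral_withDensity_eq_lintegral_mul _ hw
    (hΦ.measurable.comp (hFx.div hN.ennreal_toReal)).ennreal_ofReal

theorem luxNormGen_integral_le [SFinite τ] [SFinite ν] (hΦ : IsYoung Φ)
    (hF : Measurable (Function.uncurry F)) :
    luxNormGen Φ ν (fun x => ∫ t, F t x ∂τ) ≤ ∫⁻ t, luxNormGen Φ ν (F t) ∂τ := by
  have hN := measurable_luxNormGen (ν := ν) hΦ hF
  refine le_of_forall_gt_imp_ge_of_dense fun k hk => ?_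
  rcases eq_or_ne k ∞ with rfl | hk_top
  · exact le_top
  have hK : 0 < k.toReal := ENNReal.toReal_pos (pos_of_gt hk).ne' hk_top
  rw [← ENNReal.ofReal_toReal hk_top] at hk ⊢
  set K := k.toReal
  refine luxNormGen_le_ofReal hK ?_
  calc ∫⁻ x, ENNReal.ofReal (Φ ((∫ t, F t x ∂τ) / K)) ∂ν
      ≤ ∫⁻ x, ∫⁻ t, luxNormGen Φ ν (F t) / ENNReal.ofReal K *
          ENNReal.ofReal (Φ (F t x / (luxNormGen Φ ν (F t)).toReal)) ∂τ ∂ν :=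
        lintegral_mono_ae <| (ae_ae_eq_zero_of_luxNormGen_eq_zero hΦ hF).mono fun x hx =>
          ofReal_map_integral_div_le hΦ hF hK hk.le hx
    _ = ∫⁻ t, luxNormGen Φ ν (F t) / ENNReal.ofReal K *
          ∫⁻ x, ENNReal.ofReal (Φ (F t x / (luxNormGen Φ ν (F t)).toReal)) ∂ν ∂τ := by
        rw [lintegral_lintegral_swap]
        · refine lintegral_congr fun t => lintegral_const_mul _ ?_
          exact (hΦ.measurable.comp (hF.of_uncurry_left.div_const _)).ennreal_ofReal
        · exact (((hN.comp measurable_snd).div_const _).mul (hΦ.measurable.comp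
            ((hF.comp measurable_swap).div
              (hN.comp measurable_snd).ennreal_toReal)).ennreal_ofReal).aemeasurable
    _ ≤ ∫⁻ t, luxNormGen Φ ν (F t) / ENNReal.ofReal K ∂τ :=
        lintegral_mono fun t => mul_le_of_le_one_right'
          (lintegral_map_div_luxNormGen_le_one hΦ hF.of_uncurry_left)
    _ ≤ 1 := lintegral_div_const_le_one hN hk.le

end Minkowski

theorem luxNormGen_measureReal_Iic_rpow_mul_le {α : Type*} [TopologicalSpace α]
    [SecondCountableTopology α] [PartialOrder α] [OrderClosedTopology α] [MeasurableSpace α]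
    [OpensMeasurableSpace α] {γ ν : Measure α} [SFinite γ] [SFinite ν] {Φ : ℝ → ℝ}
    (hΦ : IsYoung Φ) {p : ℝ} (hp : 0 < p) (hΛ : ConvexOn ℝ univ fun t => Φ (|t| ^ (1 / p)))
    {h : α → ℝ} (hh : Measurable h) :
    luxNormGen Φ ν (fun x => γ.real (Iic x) ^ (1 / p) * h x) ^ p
      ≤ ∫⁻ t, luxNormGen Φ (ν.restrict (Ici t)) h ^ p ∂γ := by
  have hΛ := hΦ.comp_abs_rpow (one_div_pos.2 hp) hΛ
  set F : α → α → ℝ := fun t => (Ici t).indicator fun x => |h x| ^ p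
  have hF : Measurable (Function.uncurry F) := by
    change Measurable ({z : α × α | z.1 ≤ z.2}.indicator fun z => |h z.2| ^ p)
    exact ((hh.comp measurable_snd).abs.pow_const p).indicator measurableSet_le'
  have hF_integral (x : α) :
      |γ.real (Iic x) ^ (1 / p) * h x| ^ p = ∫ t, F t x ∂γ := by
    calc |γ.real (Iic x) ^ (1 / p) * h x| ^ p = γ.real (Iic x) * |h x| ^ p := by
          rw [abs_mul, Real.mul_rpow (abs_nonneg _) (abs_nonneg _), abs_of_nonneg (by positivity),
            one_div, Real.rpow_inv_rpow measureReal_nonneg hp.ne']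
      _ = ∫ t, (Iic x).indicator (fun _ => |h x| ^ p) t ∂γ := by
          rw [integral_indicator_const _ measurableSet_Iic, smul_eq_mul]
      _ = ∫ t, F t x ∂γ := rfl
  have hF_norm (t : α) : luxNormGen (fun s => Φ (|s| ^ (1 / p))) ν (F t)
      = luxNormGen Φ (ν.restrict (Ici t)) h ^ p := by
    rw [luxNormGen_rpow hΦ hp, luxNormGen_indicator hΛ.map_zero measurableSet_Ici]
  rw [luxNormGen_rpow hΦ hp]
  simp only [hF_integral, ← hF_norm]
  exact luxNormGen_integral_le hΛ hF

section WeightMeasure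

/-- The measure `w(x) dx` on `[a,b]`, which expresses the norms and integrals of the theorem in
measure-theoretic terms; the density is `ℝ≥0`-valued so that no sign condition has to be carried. -/
def weightMeasure (w : ℝ → ℝ≥0) (a b : ℝ) : Measure ℝ :=
  (volume.restrict (Icc a b)).withDensity fun x => w x

instance (w : ℝ → ℝ≥0) (a b : ℝ) : SFinite (weightMeasure w a b) := by
  unfold weightMeasure; infer_instance

variable {w : ℝ → ℝ≥0} {a b : ℝ}

lemma lintegral_weightMeasure (hw : Measurable w) (f : ℝ → ℝ≥0∞) :
    ∫⁻ x, f x ∂weightMeasure w a b = ∫⁻ x in Icc a b, w x * f x :=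
  lintegral_withDensity_eq_lintegral_mul_non_measurable _ hw.coe_nnreal_ennreal
    (ae_of_all _ fun _ => ENNReal.coe_lt_top) f

lemma weightMeasure_Iic {x : ℝ} (hx : x ≤ b) :
    weightMeasure w a b (Iic x) = wInt (fun t => w t) a x := by
  have hset : Iic x ∩ Icc a b = Icc a x := by
    rw [← Ici_inter_Iic, inter_left_comm, Iic_inter_Iic, inf_eq_left.2 hx, Ici_inter_Iic]
  rw [weightMeasure, withDensity_apply _ measurableSet_Iic,
    Measure.restrict_restrict measurableSet_Iic, hset]
  simp only [wInt, ENNReal.ofReal_coe_nnreal]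

lemma weightMeasure_restrict_Ici {t : ℝ} (ht : a ≤ t) :
    (weightMeasure w a b).restrict (Ici t) = weightMeasure w t b := by
  have hset : Ici t ∩ Icc a b = Icc t b := by
    rw [← Ici_inter_Iic, ← inter_assoc, Ici_inter_Ici, sup_eq_left.2 ht, Ici_inter_Iic]
  rw [weightMeasure, restrict_withDensity measurableSet_Ici,
    Measure.restrict_restrict measurableSet_Ici, hset, weightMeasure]

lemma luxNorm_eq_luxNormGen (hw : Measurable w) (Φ f : ℝ → ℝ) :
    luxNorm Φ (fun x => w x) a b f = luxNormGen Φ (weightMeasure w a b) f := by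
  simp only [luxNorm, luxNormGen, lintegral_weightMeasure hw, mul_comm (Φ _),
    ENNReal.ofReal_mul NNReal.zero_le_coe, ENNReal.ofReal_coe_nnreal]

end WeightMeasure

theorem gauge_norm_integral_estimate_general {a b p : ℝ} (hp : 0 < p) {Φ : ℝ → ℝ} (hΦ : IsYoung Φ)
    (hΛ : ConvexOn ℝ univ fun t => Φ (|t| ^ (1 / p))) {μ g : ℝ → ℝ≥0} (hμ : Measurable μ)
    (hg : Measurable g) {h : ℝ → ℝ} (hh : Measurable h) :
    luxNorm Φ (fun x => μ x) a b (fun x => (wInt (fun t => g t) a x).toReal ^ (1 / p) * h x) ^ p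
      ≤ ∫⁻ t in Icc a b, g t * luxNorm Φ (fun x => μ x) t b h ^ p := by
  set ν := weightMeasure μ a b
  set γ := weightMeasure g a b
  have hprimitive : (fun x => (wInt (fun t => g t) a x).toReal ^ (1 / p) * h x)
      =ᵐ[ν] fun x => γ.real (Iic x) ^ (1 / p) * h x := by
    filter_upwards [(withDensity_absolutelyContinuous _ _).ae_le
      (ae_restrict_mem measurableSet_Icc)] with x hx
    rw [measureReal_def, weightMeasure_Iic hx.2]
  calc luxNorm Φ (fun x => μ x) a b
        (fun x => (wInt (fun t => g t) a x).toReal ^ (1 / p) * h x) ^ p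
      = luxNormGen Φ ν (fun x => γ.real (Iic x) ^ (1 / p) * h x) ^ p := by
        rw [luxNorm_eq_luxNormGen hμ, luxNormGen_congr_ae hprimitive]
    _ ≤ ∫⁻ t, luxNormGen Φ (ν.restrict (Ici t)) h ^ p ∂γ :=
        luxNormGen_measureReal_Iic_rpow_mul_le hΦ hp hΛ hh
    _ = ∫⁻ t in Icc a b, g t * luxNorm Φ (fun x => μ x) t b h ^ p := by
        rw [lintegral_weightMeasure hg]
        refine setLIntegral_congr_fun measurableSet_Icc fun t ht => ?_
        simp only [ν, weightMeasure_restrict_Ici ht.1, luxNorm_eq_luxNormGen hμ]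

/-- Key estimate (eqn. (ok_ineq_2)):
`‖(∫ₐ^• g)^{1/p} h‖_{L_μ^Φ[a,b]}^p ≤ 2 ∫ₐ^b g(t) ‖h‖_{L_μ^Φ[t,b]}^p dt`. -/
theorem gauge_norm_integral_estimate
    (a b : ℝ) (hab : a < b) (p : ℝ) (hp : 1 ≤ p)
    (Φ μ : ℝ → ℝ) (hΦ : IsYoung Φ) (hμ : IsWeight μ a b)
    (hΛ : ConvexOn ℝ Set.univ (fun t => Φ (|t| ^ (1 / p))))
    (h g : ℝ → ℝ) (hh : Measurable h) (hg : Measurable g)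
    (hh0 : ∀ x, 0 ≤ h x) (hg0 : ∀ x, 0 ≤ g x) :
    (luxNorm Φ μ a b (fun x => (wInt g a x).toReal ^ (1 / p) * h x)) ^ p
      ≤ 2 * ∫⁻ t in Set.Icc a b, ENNReal.ofReal (g t) * (luxNorm Φ μ t b h) ^ p := by
  lift μ to ℝ → ℝ≥0 using hμ.2.1
  lift g to ℝ → ℝ≥0 using hg0
  simp only [ENNReal.ofReal_coe_nnreal]
  exact (gauge_norm_integral_estimate_general (zero_lt_one.trans_le hp) hΦ hΛ
    (measurable_coe_nnreal_real_iff.1 hμ.1) (measurable_coe_nnreal_real_iff.1 hg) hh).trans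
    (le_mul_of_one_le_left' one_le_two)
end
end

section
/- Let 0 < b < ∞, 1 < p < q < ∞ with p' = p/(p−1), and let w(x) = 2e^{-1/x²}/x³ on (0,b]. Then sup_{0<x<b} { (∫_0^x w(t) dt)^{1/q} · (∫_x^b (∫_t^b w(s) ds)^{p'} · w(t)^{1−p'} dt)^{1/p'} } = ∞; in fact the quantity (∫_0^x w)^{1/q} · (∫_x^b (∫_t^b w)^{p'} w(t)^{1−p'} dt)^{1/p'} tends to ∞ as x → 0⁺. In particular, the Chua–Wheeden constant K_{p,q}(w,w,w) on [0,b] is infinite, so the (q,p) weighted Poincaré inequality fails for this weight for every q > p. -/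
open MeasureTheory Set Filter
open scoped ENNReal NNReal

noncomputable section

/-!
For any weight, Hölder's inequality gives `y - x ≤ w[x,y]^{1/p} (∫_x^y w^{1-p'})^{1/p'}`, so the
test quantity at `x` is at least `w[y,b] (y - x) w[0,x]^{1/q} / w[x,y]^{1/p}` for every `y ≤ b`.
If `w[0,y] ≤ C w[0,x]` and `y` stays away from `b`, this dominates a constant multiple of
`(y - x) w[0,x]^{1/q - 1/p}`. For the present weight `w[0,x] = e^{-1/x²}`, the choice
`y = x + x³` multiplies `w[0,x]` by at most `e²`, and `x³ e^{(1/p - 1/q)/x²}` blows up.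
-/

open scoped Topology

section Weights

variable {w : ℝ → ℝ} {a b x y : ℝ}

lemma wInt_mono {a' b' : ℝ} (ha : a' ≤ a) (hb : b ≤ b') : wInt w a b ≤ wInt w a' b' :=
  lintegral_mono_set (Icc_subset_Icc ha hb)

lemma wInt_ne_zero (hw : Measurable w) (hxy : x < y)
    (hpos : ∀ᵐ t ∂volume.restrict (Icc x y), 0 < w t) : wInt w x y ≠ 0 := by
  intro h
  have hzero := (lintegral_eq_zero_iff hw.ennreal_ofReal).1 h
  have hfalse : ∀ᵐ _ ∂volume.restrict (Icc x y), False := by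
    filter_upwards [hpos, hzero] with t ht ht0
    exact (ENNReal.ofReal_pos.2 ht).ne' ht0
  rw [eventually_false_iff_eq_bot, ae_eq_bot, Measure.restrict_eq_zero, Real.volume_Icc,
    ENNReal.ofReal_eq_zero] at hfalse
  linarith

lemma wInt_eq_ofReal_sub_of_hasDerivAt {F : ℝ → ℝ} (hab : a ≤ b)
    (hF : ContinuousOn F (Icc a b)) (hderiv : ∀ t ∈ Ioo a b, HasDerivAt F (w t) t)
    (hw : ∀ t ∈ Ioo a b, 0 ≤ w t) : wInt w a b = ENNReal.ofReal (F b - F a) := by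
  have hint : IntegrableOn w (Ioc a b) :=
    intervalIntegral.integrableOn_deriv_of_nonneg hF hderiv hw
  have hnonneg : 0 ≤ᵐ[volume.restrict (Ioc a b)] w := by
    rw [← restrict_Ioo_eq_restrict_Ioc]
    exact ae_restrict_of_forall_mem measurableSet_Ioo hw
  have hFTC := intervalIntegral.integral_eq_sub_of_hasDerivAt_of_le hab hF hderiv
    ((intervalIntegrable_iff_integrableOn_Ioc_of_le hab).2 hint)
  rw [wInt, ← restrict_Ioc_eq_restrict_Icc, ← ofReal_integral_eq_lintegral_ofReal hint hnonneg,
    ← intervalIntegral.integral_of_le hab, hFTC]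

end Weights

lemma measure_univ_le_lintegral_rpow_mul_lintegral_rpow {α : Type*} [MeasurableSpace α]
    {μ : Measure α} {w : α → ℝ} {p p' : ℝ} (hp : p.HolderConjugate p') (hw : AEMeasurable w μ)
    (hpos : ∀ᵐ t ∂μ, 0 < w t) :
    μ univ ≤ (∫⁻ t, ENNReal.ofReal (w t) ∂μ) ^ (1 / p) *
      (∫⁻ t, ENNReal.ofReal (w t ^ (1 - p')) ∂μ) ^ (1 / p') := by
  let f := fun t => ENNReal.ofReal (w t ^ (1 / p))
  let g := fun t => ENNReal.ofReal (w t ^ (-(1 / p)))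
  have hfg : ∫⁻ t, (f * g) t ∂μ = μ univ := by
    rw [← lintegral_one]
    refine lintegral_congr_ae ?_
    filter_upwards [hpos] with t ht
    rw [Pi.mul_apply, ← ENNReal.ofReal_mul (by positivity), ← Real.rpow_add ht]
    simp
  have hf : ∫⁻ t, f t ^ p ∂μ = ∫⁻ t, ENNReal.ofReal (w t) ∂μ := by
    refine lintegral_congr_ae ?_
    filter_upwards [hpos] with t ht
    rw [ENNReal.ofReal_rpow_of_nonneg (by positivity) hp.nonneg, ← Real.rpow_mul ht.le,
      one_div_mul_cancel hp.ne_zero, Real.rpow_one]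
  have hexp : -(1 / p) * p' = 1 - p' := by
    linear_combination p' * hp.one_sub_inv + mul_inv_cancel₀ hp.symm.ne_zero
  have hg : ∫⁻ t, g t ^ p' ∂μ = ∫⁻ t, ENNReal.ofReal (w t ^ (1 - p')) ∂μ := by
    refine lintegral_congr_ae ?_
    filter_upwards [hpos] with t ht
    rw [ENNReal.ofReal_rpow_of_nonneg (by positivity) hp.symm.nonneg, ← Real.rpow_mul ht.le, hexp]
  rw [← hfg, ← hf, ← hg]
  exact ENNReal.lintegral_mul_le_Lp_mul_Lq μ hp (hw.pow_const _).ennreal_ofReal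
    (hw.pow_const _).ennreal_ofReal

/-- The dual factor `(∫_x^b w[t,b]^{p'} w(t)^{1-p'} dt)^{1/p'}` in the second supremum of the
Chua–Wheeden constant `K_{p,q}(w,w,w)`. -/
def dualFactor (w : ℝ → ℝ) (b p' x : ℝ) : ℝ≥0∞ :=
  (∫⁻ t in Icc x b, ENNReal.ofReal ((wInt w t b).toReal ^ p' * w t ^ (1 - p'))) ^ (1 / p')

/-- The quantity `w[a,x]^{1/q} (∫_x^b w[t,b]^{p'} w(t)^{1-p'} dt)^{1/p'}`, whose supremum over
`a < x < b` is the second supremum of the Chua–Wheeden constant `K_{p,q}(w,w,w)` on `[a,b]`. -/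
def chuaWheedenQuantity (w : ℝ → ℝ) (a b q p' x : ℝ) : ℝ≥0∞ :=
  wInt w a x ^ (1 / q) * dualFactor w b p' x

section LowerBound

variable {w : ℝ → ℝ} {a b p p' q x y : ℝ}

lemma wInt_mul_lintegral_rpow_le_dualFactor (hp' : 0 < p')
    (hpos : ∀ᵐ t ∂volume.restrict (Icc x y), 0 < w t) (hfin : wInt w x b ≠ ⊤) (hxy : x ≤ y)
    (hyb : y ≤ b) :
    wInt w y b * (∫⁻ t in Icc x y, ENNReal.ofReal (w t ^ (1 - p'))) ^ (1 / p') ≤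
      dualFactor w b p' x := by
  have hfin' : ∀ t, x ≤ t → wInt w t b ≠ ⊤ := fun t ht =>
    ne_top_of_le_ne_top hfin (wInt_mono ht le_rfl)
  have hroot : wInt w y b = ENNReal.ofReal ((wInt w y b).toReal ^ p') ^ (1 / p') := by
    rw [← ENNReal.ofReal_rpow_of_nonneg ENNReal.toReal_nonneg hp'.le, one_div,
      ENNReal.rpow_rpow_inv hp'.ne', ENNReal.ofReal_toReal (hfin' y hxy)]
  rw [hroot, ← ENNReal.mul_rpow_of_nonneg _ _ (by positivity),
    ← lintegral_const_mul' _ _ ENNReal.ofReal_ne_top]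
  refine ENNReal.rpow_le_rpow ?_ (by positivity)
  refine le_trans (lintegral_mono_ae ?_) (lintegral_mono_set (Icc_subset_Icc_right hyb))
  filter_upwards [hpos, ae_restrict_mem measurableSet_Icc] with t ht htxy
  have hmono : (wInt w y b).toReal ≤ (wInt w t b).toReal :=
    ENNReal.toReal_mono (hfin' t htxy.1) (wInt_mono htxy.2 le_rfl)
  rw [← ENNReal.ofReal_mul (by positivity)]
  gcongr

lemma wInt_mul_ofReal_sub_le (hp : p.HolderConjugate p') (hw : Measurable w)
    (hpos : ∀ᵐ t ∂volume.restrict (Icc x y), 0 < w t) (hfin : wInt w x b ≠ ⊤) (hxy : x ≤ y)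
    (hyb : y ≤ b) :
    wInt w y b * ENNReal.ofReal (y - x) ≤ wInt w x y ^ (1 / p) * dualFactor w b p' x := by
  set J := ∫⁻ t in Icc x y, ENNReal.ofReal (w t ^ (1 - p'))
  have hoelder : ENNReal.ofReal (y - x) ≤ wInt w x y ^ (1 / p) * J ^ (1 / p') := by
    rw [← Real.volume_Icc, ← Measure.restrict_apply_univ]
    exact measure_univ_le_lintegral_rpow_mul_lintegral_rpow hp hw.aemeasurable hpos
  calc wInt w y b * ENNReal.ofReal (y - x)
      ≤ wInt w y b * (wInt w x y ^ (1 / p) * J ^ (1 / p')) := by gcongr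
    _ = wInt w x y ^ (1 / p) * (wInt w y b * J ^ (1 / p')) := by ring
    _ ≤ wInt w x y ^ (1 / p) * dualFactor w b p' x := by
      gcongr
      exact wInt_mul_lintegral_rpow_le_dualFactor hp.symm.pos hpos hfin hxy hyb

lemma wInt_mul_ofReal_sub_mul_wInt_rpow_le (hp : p.HolderConjugate p') (hw : Measurable w)
    (hpos : ∀ᵐ t ∂volume.restrict (Icc a b), 0 < w t) (hfin : wInt w a b ≠ ⊤) (hax : a < x)
    (hxy : x ≤ y) (hyb : y ≤ b) {C : ℝ≥0∞} (hC : wInt w a y ≤ C * wInt w a x) :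
    wInt w y b * (ENNReal.ofReal (y - x) * wInt w a x ^ (1 / q - 1 / p)) ≤
      C ^ (1 / p) * chuaWheedenQuantity w a b q p' x := by
  have hpos' : ∀ {c d}, a ≤ c → d ≤ b → ∀ᵐ t ∂volume.restrict (Icc c d), 0 < w t :=
    fun hc hd => ae_restrict_of_ae_restrict_of_subset (Icc_subset_Icc hc hd) hpos
  have hW0 : wInt w a x ≠ 0 := wInt_ne_zero hw hax (hpos' le_rfl (hxy.trans hyb))
  have hWtop : wInt w a x ≠ ⊤ := ne_top_of_le_ne_top hfin (wInt_mono le_rfl (hxy.trans hyb))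
  have hxb : wInt w x b ≠ ⊤ := ne_top_of_le_ne_top hfin (wInt_mono hax.le le_rfl)
  set W := wInt w a x
  set D := dualFactor w b p' x
  calc wInt w y b * (ENNReal.ofReal (y - x) * W ^ (1 / q - 1 / p))
      = wInt w y b * ENNReal.ofReal (y - x) * W ^ (1 / q - 1 / p) := by ring
    _ ≤ wInt w x y ^ (1 / p) * D * W ^ (1 / q - 1 / p) :=
      mul_le_mul_left (wInt_mul_ofReal_sub_le hp hw (hpos' hax.le hyb) hxb hxy hyb) _
    _ ≤ (C * W) ^ (1 / p) * D * W ^ (1 / q - 1 / p) := by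
      gcongr
      · exact hp.one_div_nonneg
      · exact (wInt_mono hax.le le_rfl).trans hC
    _ = C ^ (1 / p) * (W ^ (1 / q - 1 / p + 1 / p) * D) := by
      rw [ENNReal.mul_rpow_of_nonneg _ _ hp.one_div_nonneg, ENNReal.rpow_add _ _ hW0 hWtop]
      ring
    _ = C ^ (1 / p) * chuaWheedenQuantity w a b q p' x := by
      rw [sub_add_cancel, chuaWheedenQuantity]

theorem tendsto_chuaWheedenQuantity_nhds_top (hab : a < b) (hp : p.HolderConjugate p')
    (hw : Measurable w) (hpos : ∀ᵐ t ∂volume.restrict (Icc a b), 0 < w t)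
    (hfin : wInt w a b ≠ ⊤) {y : ℝ → ℝ} (hxy : ∀ᶠ x in 𝓝[>] a, x ≤ y x)
    (hy : Tendsto y (𝓝[>] a) (𝓝 a)) {C : ℝ≥0}
    (hC : ∀ᶠ x in 𝓝[>] a, wInt w a (y x) ≤ C * wInt w a x)
    (hblowup : Tendsto (fun x => ENNReal.ofReal (y x - x) * wInt w a x ^ (1 / q - 1 / p))
      (𝓝[>] a) (𝓝 ⊤)) :
    Tendsto (chuaWheedenQuantity w a b q p') (𝓝[>] a) (𝓝 ⊤) := by
  obtain ⟨c, hac, hcb⟩ := exists_between hab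
  have hc0 : wInt w c b ≠ 0 := wInt_ne_zero hw hcb
    (ae_restrict_of_ae_restrict_of_subset (Icc_subset_Icc_left hac.le) hpos)
  have hC0 : (C : ℝ≥0∞) ^ (1 / p) ≠ ⊤ :=
    ENNReal.rpow_ne_top_of_nonneg hp.one_div_nonneg ENNReal.coe_ne_top
  have hlower : Tendsto (fun x => wInt w c b *
      (ENNReal.ofReal (y x - x) * wInt w a x ^ (1 / q - 1 / p)) / (C : ℝ≥0∞) ^ (1 / p))
      (𝓝[>] a) (𝓝 ⊤) := by
    have h := ENNReal.Tendsto.const_mul (a := wInt w c b) hblowup (.inl ENNReal.top_ne_zero)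
    rw [ENNReal.mul_top hc0] at h
    rw [← ENNReal.top_div_of_ne_top hC0]
    exact ENNReal.Tendsto.div_const h (.inl ENNReal.top_ne_zero)
  refine tendsto_nhds_top_mono hlower ?_
  filter_upwards [hxy, hC, hy.eventually_lt_const hac, self_mem_nhdsWithin] with x hxy hC hyc hax
  refine ENNReal.div_le_of_le_mul' (le_trans ?_ (wInt_mul_ofReal_sub_mul_wInt_rpow_le hp hw hpos
    hfin hax hxy (hyc.le.trans hcb.le) hC))
  gcongr
  exact wInt_mono hyc.le le_rfl

end LowerBound

lemma biSup_eq_top_of_tendsto {ι α : Type*} [TopologicalSpace α] [CompleteLattice α]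
    [ClosedIicTopology α] {f : ι → α} {l : Filter ι} [l.NeBot] {s : Set ι} (hs : s ∈ l)
    (hf : Tendsto f l (𝓝 ⊤)) : ⨆ x ∈ s, f x = ⊤ :=
  top_le_iff.1 (le_of_tendsto hf (mem_of_superset hs fun _ hx => le_iSup₂_of_le _ hx le_rfl))

section DegenerateWeight

/-- The weight `w(x) = 2e^{-1/x²}/x³`, the derivative of `e^{-1/x²}`. Since `x / 0 = 0`, it
vanishes at `0`. -/
def degenerateWeight (x : ℝ) : ℝ := 2 * Real.exp (-(1 / x ^ 2)) / x ^ 3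

variable {x : ℝ}

lemma measurable_degenerateWeight : Measurable degenerateWeight := by
  unfold degenerateWeight
  fun_prop

lemma degenerateWeight_pos (hx : 0 < x) : 0 < degenerateWeight x := by
  unfold degenerateWeight
  positivity

lemma ae_restrict_Icc_degenerateWeight_pos (b : ℝ) :
    ∀ᵐ t ∂volume.restrict (Icc 0 b), 0 < degenerateWeight t := by
  rw [← restrict_Ioc_eq_restrict_Icc]
  exact ae_restrict_of_forall_mem measurableSet_Ioc fun t ht => degenerateWeight_pos ht.1

lemma expNegInvGlue_sq (hx : x ≠ 0) : expNegInvGlue (x ^ 2) = Real.exp (-(1 / x ^ 2)) := by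
  rw [expNegInvGlue, if_neg (sq_pos_of_ne_zero hx).not_ge, one_div]

lemma hasDerivAt_expNegInvGlue_sq (hx : x ≠ 0) :
    HasDerivAt (fun t => expNegInvGlue (t ^ 2)) (degenerateWeight x) x := by
  have hexp : HasDerivAt (fun t : ℝ => Real.exp (-(t ^ 2)⁻¹)) (degenerateWeight x) x := by
    refine ((hasDerivAt_pow 2 x).fun_inv (by positivity)).fun_neg.exp.congr_deriv ?_
    rw [degenerateWeight]
    field_simp
    norm_num [mul_comm]
  refine hexp.congr_of_eventuallyEq ?_
  filter_upwards [isOpen_ne.mem_nhds hx] with t ht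
  rw [expNegInvGlue_sq ht, one_div]

lemma wInt_degenerateWeight (hx : 0 < x) :
    wInt degenerateWeight 0 x = ENNReal.ofReal (Real.exp (-(1 / x ^ 2))) := by
  have hcont : Continuous fun t : ℝ => expNegInvGlue (t ^ 2) :=
    (expNegInvGlue.contDiff (n := 0)).continuous.comp (continuous_pow 2)
  rw [wInt_eq_ofReal_sub_of_hasDerivAt hx.le hcont.continuousOn
    (fun t ht => hasDerivAt_expNegInvGlue_sq ht.1.ne') (fun t ht => (degenerateWeight_pos ht.1).le)]
  simp [expNegInvGlue_sq hx.ne']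

lemma wInt_degenerateWeight_add_cube_le (hx : 0 < x) :
    wInt degenerateWeight 0 (x + x ^ 3) ≤
      ENNReal.ofReal (Real.exp 2) * wInt degenerateWeight 0 x := by
  rw [wInt_degenerateWeight hx, wInt_degenerateWeight (by positivity),
    ← ENNReal.ofReal_mul (by positivity), ← Real.exp_add]
  have hsub : 1 / x ^ 2 - 1 / (x + x ^ 3) ^ 2 = (2 + x ^ 2) / (1 + x ^ 2) ^ 2 := by
    have hfactor : x + x ^ 3 = x * (1 + x ^ 2) := by ring
    rw [hfactor]
    field_simp
    ring
  have hle : (2 + x ^ 2) / (1 + x ^ 2) ^ 2 ≤ 2 := by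
    rw [div_le_iff₀ (by positivity)]
    nlinarith [sq_nonneg x, sq_nonneg (x ^ 2)]
  gcongr
  linarith

lemma tendsto_pow_mul_exp_mul_inv_sq (n : ℕ) {c : ℝ} (hc : 0 < c) :
    Tendsto (fun x : ℝ => x ^ n * Real.exp (c * (1 / x ^ 2))) (𝓝[>] 0) atTop := by
  have hsq : Tendsto (fun x : ℝ => x⁻¹ ^ 2) (𝓝[>] 0) atTop :=
    (tendsto_pow_atTop two_ne_zero).comp tendsto_inv_nhdsGT_zero
  refine ((tendsto_exp_mul_div_rpow_atTop (n / 2) c hc).comp hsq).congr' ?_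
  filter_upwards [self_mem_nhdsWithin] with x hx
  have hx : 0 < x := hx
  have hpow : (x⁻¹ ^ 2) ^ (n / 2 : ℝ) = (x ^ n)⁻¹ := by
    rw [← Real.rpow_natCast_mul (by positivity)]
    simp [mul_div_cancel₀]
  rw [Function.comp_apply, hpow, div_inv_eq_mul, mul_comm, inv_pow, one_div]

lemma tendsto_chuaWheedenQuantity_degenerateWeight {b p p' q : ℝ} (hb : 0 < b)
    (hp : p.HolderConjugate p') (hpq : p < q) :
    Tendsto (chuaWheedenQuantity degenerateWeight 0 b q p') (𝓝[>] 0) (𝓝 ⊤) := by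
  have hexponent : 0 < 1 / p - 1 / q := sub_pos.2 (one_div_lt_one_div_of_lt hp.pos hpq)
  have hfin : wInt degenerateWeight 0 b ≠ ⊤ := by
    rw [wInt_degenerateWeight hb]
    exact ENNReal.ofReal_ne_top
  have hy : Tendsto (fun x : ℝ => x + x ^ 3) (𝓝[>] 0) (𝓝 0) :=
    (Continuous.tendsto' (by fun_prop) 0 0 (by simp)).mono_left nhdsWithin_le_nhds
  refine tendsto_chuaWheedenQuantity_nhds_top (C := (Real.exp 2).toNNReal) hb hp
    measurable_degenerateWeight (ae_restrict_Icc_degenerateWeight_pos b) hfin ?_ hy ?_ ?_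
  · filter_upwards [self_mem_nhdsWithin] with x hx
    exact le_add_of_nonneg_right (pow_nonneg hx.le 3)
  · filter_upwards [self_mem_nhdsWithin] with x hx
    exact wInt_degenerateWeight_add_cube_le hx
  · refine (ENNReal.tendsto_ofReal_atTop.comp
      (tendsto_pow_mul_exp_mul_inv_sq 3 hexponent)).congr' ?_
    filter_upwards [self_mem_nhdsWithin] with x hx
    rw [Function.comp_apply, wInt_degenerateWeight hx, add_sub_cancel_left,
      ENNReal.ofReal_mul (pow_nonneg hx.le 3), ENNReal.ofReal_rpow_of_pos (Real.exp_pos _),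
      ← Real.exp_mul]
    ring_nf

end DegenerateWeight

/-- For the weight `w(x) = 2e^{-1/x²}/x³` on `(0,b]` and any `q > p`, the second
quantity in the Chua–Wheeden constant `K_{p,q}(w,w,w)` blows up as `x → 0⁺`;
in particular its supremum over `0 < x < b` is infinite. -/
theorem degenerate_weight_Kpq_infinite
    (b p q pc : ℝ) (hb : 0 < b) (hp : 1 < p) (hq : p < q) (hpc : pc = p / (p - 1))
    (w : ℝ → ℝ) (hw : w = fun x => 2 * Real.exp (-(1 / x ^ 2)) / x ^ 3) :
    Filter.Tendsto
      (fun x => (wInt w 0 x) ^ (1 / q) *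
        (∫⁻ t in Set.Icc x b,
          ENNReal.ofReal ((wInt w t b).toReal ^ pc * w t ^ (1 - pc))) ^ (1 / pc))
      (nhdsWithin 0 (Set.Ioi 0)) (nhds ⊤) ∧
    (⨆ x ∈ Set.Ioo (0:ℝ) b,
        (wInt w 0 x) ^ (1 / q) *
          (∫⁻ t in Set.Icc x b,
            ENNReal.ofReal ((wInt w t b).toReal ^ pc * w t ^ (1 - pc))) ^ (1 / pc)) = ⊤ := by
  obtain rfl : w = degenerateWeight := hw
  have hconj : p.HolderConjugate pc := (Real.holderConjugate_iff_eq_conjExponent hp).2 hpc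
  have hlim := tendsto_chuaWheedenQuantity_degenerateWeight hb hconj hq
  exact ⟨hlim, biSup_eq_top_of_tendsto (Ioo_mem_nhdsGT hb) hlim⟩
end
end
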